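/- Let (T,f) be the Hubbard tree with *-periodic kneading sequence ν, and let z be a periodic point of period m whose orbit does not contain c₀; if z is not a branch point, assume that the itinerary of z also has period m. If the first m−1 entries of the itinerary of z agree with the first m−1 entries of ν, then z is characteristic. Conversely, if z is a characteristic branch point, then the first m entries of its itinerary agree with the first m entries of ν. -/

import Mathlib

/- Common definitions for formalizing "Admissibility of kneading sequences and
structure of Hubbard trees for quadratic polynomials" by Bruin–Schleicher. -/

namespace HubbardTrees

/-- The symbols `0`, `1`, `*` used for itineraries and kneading sequences. -/
inductive Sym : Type
  | zero : Sym
  | one : Sym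
  | star : Sym
deriving DecidableEq

/-- `A` is an arc in `X` joining `x` and `y` (a point if `x = y`, otherwise a
homeomorphic image of `[0,1]` with endpoints `x` and `y`). -/
def IsArcBetween {X : Type*} [TopologicalSpace X] (A : Set X) (x y : X) : Prop :=
  (x = y ∧ A = {x}) ∨
  (x ≠ y ∧ ∃ γ : Path x y, Topology.IsEmbedding ⇑γ ∧ Set.range ⇑γ = A)

/-- The global arms at `x`: the connected components of `X \ {x}`. -/
def arms {X : Type*} [TopologicalSpace X] (x : X) : Set (Set X) :=
  {C | ∃ y, y ≠ x ∧ C = connectedComponentIn {x}ᶜ y}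

/-- The global arm at `x` containing `y` (for `y ≠ x`): the component of `X \ {x}`
containing `y`.  Local arms at `x` being germs of global arms, we represent the local
arm at `x` pointing towards `y` by this set. -/
def armTo {X : Type*} [TopologicalSpace X] (x y : X) : Set X :=
  connectedComponentIn {x}ᶜ y

/-- `x` is an endpoint: it has exactly one arm. -/
def IsEndpoint {X : Type*} [TopologicalSpace X] (x : X) : Prop :=
  (arms x).ncard = 1

/-- `x` is a branch point: it has at least three arms. -/
def IsBranchPt {X : Type*} [TopologicalSpace X] (x : X) : Prop :=
  3 ≤ (arms x).ncard

/-- `f` maps the set `A` homeomorphically onto its image. -/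
def MapsHomeoOn {X : Type*} [TopologicalSpace X] (f : X → X) (A : Set X) : Prop :=
  Topology.IsEmbedding (A.restrict f)

/-- `f` is a local homeomorphism onto its image at `x`. -/
def IsLocalHomeoAt {X : Type*} [TopologicalSpace X] (f : X → X) (x : X) : Prop :=
  ∃ U : Set X, IsOpen U ∧ x ∈ U ∧ Topology.IsEmbedding (U.restrict f)

/-- `g` sends the local arm at `x` represented by the global arm `C` to the local
arm at `g x` represented by `C'` (germ condition: some initial piece of `C` at `x`
is mapped into `C'`). -/
def MapsLocalArm {X : Type*} [TopologicalSpace X] (g : X → X) (x : X) (C C' : Set X) : Prop :=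
  C ∈ arms x ∧ C' ∈ arms (g x) ∧ ∃ U ∈ nhds x, g '' (C ∩ U) ⊆ C'

/-- `z` is periodic under `f` with exact period `n`. -/
def ExactPeriod {Y : Type*} (f : Y → Y) (z : Y) (n : ℕ) : Prop :=
  1 ≤ n ∧ f^[n] z = z ∧ ∀ k, 1 ≤ k → k < n → f^[k] z ≠ z

/-- The first return map `f^[n]` of the fixed point `z` of `f^[n]` permutes all the
local arms at `z` transitively in a single cycle. -/
def ArmsTransitive {X : Type*} [TopologicalSpace X] (f : X → X) (n : ℕ) (z : X) : Prop :=
  ∀ C ∈ arms z, ∀ C' ∈ arms z, ∃ j : ℕ, MapsLocalArm (f^[n * j]) z C C'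

/-- An (abstract) Hubbard tree: a finite topological tree `X` together with a
continuous surjection `f` and a critical point `c0`, subject to the axioms of
Bruin–Schleicher. -/
structure HubbardTree (X : Type*) [TopologicalSpace X] : Type _ where
  /-- the dynamics -/
  f : X → X
  /-- the critical point -/
  c0 : X
  compact : CompactSpace X
  t2 : T2Space X
  conn : ConnectedSpace X
  /-- the unique arc `[x,y]` joining two points -/
  arc : X → X → Set X
  arc_isArc : ∀ x y : X, IsArcBetween (arc x y) x y
  arc_unique : ∀ (x y : X) (A : Set X), IsArcBetween A x y → A = arc x y
  -- finiteness of the tree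
  arms_finite : ∀ x : X, (arms x).Finite
  branch_finite : Set.Finite {x : X | IsBranchPt x}
  endpoint_finite : Set.Finite {x : X | IsEndpoint x}
  cont : Continuous f
  surj : Function.Surjective f
  /-- every point has at most two inverse images -/
  two_preimages : ∀ y : X, ∃ a b : X, f ⁻¹' {y} ⊆ {a, b}
  /-- local homeomorphism onto its image away from the critical point -/
  local_homeo : ∀ x : X, x ≠ c0 → IsLocalHomeoAt f x
  /-- all endpoints lie on the critical orbit -/
  endpoints_on_orbit : ∀ x : X, IsEndpoint x → ∃ k : ℕ, f^[k] c0 = x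
  /-- the critical point is periodic or preperiodic -/
  crit_preperiodic : ∃ k n : ℕ, 1 ≤ n ∧ f^[k + n] c0 = f^[k] c0
  /-- the critical point is not fixed -/
  crit_not_fixed : f c0 ≠ c0
  /-- expansivity -/
  expansive : ∀ x y : X, x ≠ y →
    (IsBranchPt x ∨ ∃ k : ℕ, f^[k] c0 = x) →
    (IsBranchPt y ∨ ∃ k : ℕ, f^[k] c0 = y) →
    ∃ n : ℕ, c0 ∈ f^[n] '' (arc x y)

namespace HubbardTree

variable {X : Type*} [TopologicalSpace X] (H : HubbardTree X)

/-- The critical value `c₁ = f(c₀)`. -/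
def c1 : X := H.f H.c0

/-- The component `T₁` of `T \ {c₀}` containing the critical value. -/
def T1 : Set X := connectedComponentIn {H.c0}ᶜ H.c1

open Classical in
/-- The symbol (`0`, `1` or `*`) attached to a point of the tree. -/
noncomputable def symOf (x : X) : Sym :=
  if x = H.c0 then Sym.star else if x ∈ H.T1 then Sym.one else Sym.zero

/-- The itinerary of `x`: a sequence of symbols, 1-indexed (the value at index `0`
is irrelevant); entry `k ≥ 1` is the symbol of `f^[k-1] x`. -/
noncomputable def itin (x : X) : ℕ → Sym :=
  fun k => H.symOf (H.f^[k - 1] x)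

/-- The kneading sequence: the itinerary of the critical value (1-indexed). -/
noncomputable def kneading : ℕ → Sym := H.itin H.c1

/-- `z` is the characteristic point of its periodic orbit: `c₁` lies in one
component of `X \ {z}` while `c₀` and all other points of the orbit lie in a
different component. -/
def IsCharacteristic (z : X) : Prop :=
  ∃ Cv Cz : Set X, Cv ∈ arms z ∧ Cz ∈ arms z ∧ Cv ≠ Cz ∧
    H.c1 ∈ Cv ∧ H.c0 ∈ Cz ∧ ∀ k : ℕ, H.f^[k] z ≠ z → H.f^[k] z ∈ Cz

/-- The first return map fixes the local arm at `z` pointing to the critical point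
and permutes all other local arms transitively in a single cycle. -/
def OtherArmsTransitive (n : ℕ) (z : X) : Prop :=
  ∀ C ∈ arms z, C ≠ armTo z H.c0 → ∀ C' ∈ arms z, C' ≠ armTo z H.c0 →
    ∃ j : ℕ, MapsLocalArm (H.f^[n * j]) z C C'

/-- `z` is the characteristic point of an evil periodic orbit of branch points of
exact period `n`. -/
def IsEvilOrbit (z : X) (n : ℕ) : Prop :=
  ExactPeriod H.f z n ∧ (∀ k : ℕ, IsBranchPt (H.f^[k] z)) ∧
    H.IsCharacteristic z ∧ ¬ ArmsTransitive H.f n z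

/-- `x` is precritical with `Step(x) = k`: `k ≥ 1` is minimal with `f^[k] x = c₁`. -/
def Step (x : X) (k : ℕ) : Prop :=
  1 ≤ k ∧ H.f^[k] x = H.c1 ∧ ∀ j, 1 ≤ j → j < k → H.f^[j] x ≠ H.c1

/-- `x` is the closest precritical point `ζ_k`. -/
def IsClosestPrecritical (x : X) (k : ℕ) : Prop :=
  H.Step x k ∧ ∀ j, 1 ≤ j → j < k → H.c1 ∉ H.f^[j] '' (H.arc H.c1 x)

/-- `x` is the earliest precritical point on the set `A`, with `Step(x) = k`:
it is a precritical point on `A` of minimal Step. -/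
def IsEarliestPrecriticalOn (A : Set X) (x : X) (k : ℕ) : Prop :=
  x ∈ A ∧ H.Step x k ∧ ∀ y ∈ A, ∀ j : ℕ, H.Step y j → k ≤ j

/-- Marked points: branch points and points of the critical orbit. -/
def MarkedPt (x : X) : Prop :=
  IsBranchPt x ∨ ∃ k : ℕ, H.f^[k] H.c0 = x

/-- Two marked points are joined by an edge if the arc between them contains no
further marked point. -/
def IsEdge (x y : X) : Prop :=
  H.MarkedPt x ∧ H.MarkedPt y ∧ x ≠ y ∧
    ∀ w ∈ H.arc x y, H.MarkedPt w → w = x ∨ w = y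

/-- Equivalence of Hubbard trees: a bijection between the marked points which
conjugates the dynamics and preserves edges. -/
def Equivalent {Y : Type*} [TopologicalSpace Y] (H' : HubbardTree Y) : Prop :=
  ∃ φ : X → Y,
    (∀ x : X, H.MarkedPt x → H'.MarkedPt (φ x)) ∧
    (∀ x x' : X, H.MarkedPt x → H.MarkedPt x' → φ x = φ x' → x = x') ∧
    (∀ y : Y, H'.MarkedPt y → ∃ x : X, H.MarkedPt x ∧ φ x = y) ∧
    φ H.c0 = H'.c0 ∧
    (∀ x : X, H.MarkedPt x → φ (H.f x) = H'.f (φ x)) ∧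
    (∀ x x' : X, H.MarkedPt x → H.MarkedPt x' →
      (H.IsEdge x x' ↔ H'.IsEdge (φ x) (φ x')))

end HubbardTree

/-! ### Combinatorics of kneading sequences -/

/-- The function `ρ_ν(n) = inf { k > n : ν_k ≠ ν_{k-n} } ∈ ℕ ∪ {∞}` (sequences are
1-indexed). -/
noncomputable def rho (ν : ℕ → Sym) (n : ℕ) : ℕ∞ :=
  sInf {e : ℕ∞ | ∃ j : ℕ, e = (j : ℕ∞) ∧ n < j ∧ ν j ≠ ν (j - n)}

/-- `RhoOrbit ν k m` means that `m` belongs to the `ρ`-orbit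
`k → ρ(k) → ρ(ρ(k)) → ⋯` of `k` (stopped before reaching `∞`). -/
inductive RhoOrbit (ν : ℕ → Sym) : ℕ → ℕ → Prop
  | refl (k : ℕ) : RhoOrbit ν k k
  | step {k m j : ℕ} : RhoOrbit ν k m → rho ν m = (j : ℕ∞) → RhoOrbit ν k j

/-- `m` occurs in the internal address `1 → ρ(1) → ρ(ρ(1)) → ⋯` of `ν`. -/
def InternalAddress (ν : ℕ → Sym) (m : ℕ) : Prop := RhoOrbit ν 1 m

/-- `ν` is a `*`-periodic kneading sequence of (exact) period `n`:
`ν = overline(1 ν₂ … ν_{n-1} *)`. -/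
def StarPeriodic (ν : ℕ → Sym) (n : ℕ) : Prop :=
  2 ≤ n ∧ ν 1 = Sym.one ∧ ν n = Sym.star ∧
    (∀ k, 1 ≤ k → ν (k + n) = ν k) ∧
    (∀ k, 1 ≤ k → k < n → ν k ≠ Sym.star)

/-- `ν` fails the admissibility condition for period `m`. -/
def FailsAdmissibility (ν : ℕ → Sym) (m : ℕ) : Prop :=
  1 ≤ m ∧
  ¬ InternalAddress ν m ∧
  (∀ k : ℕ, k ∣ m → 1 ≤ k → k < m → rho ν k ≤ (m : ℕ∞)) ∧
  ∃ R r : ℕ, rho ν m = (R : ℕ∞) ∧ 1 ≤ r ∧ r ≤ m ∧ r ≡ R [MOD m] ∧ RhoOrbit ν r m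

open Classical in
/-- The number `q(m)` of arms predicted by the kneading sequence, where
`ρ(m) = R < ∞` and `r ∈ {1,…,m}` is congruent to `R` modulo `m`. -/
noncomputable def qArms (ν : ℕ → Sym) (m R r : ℕ) : ℕ :=
  if RhoOrbit ν r m then (R - r) / m + 1 else (R - r) / m + 2


/-! ### Embeddings into the plane and cyclic order of arms -/

/-- Three points in the plane are in (strictly) counterclockwise position. -/
def Ccw (p q r : ℝ × ℝ) : Prop :=
  0 < (q.1 - p.1) * (r.2 - p.2) - (q.2 - p.2) * (r.1 - p.1)

namespace HubbardTree

variable {X : Type*} [TopologicalSpace X] (H : HubbardTree X)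

/-- Under an embedding `φ` of the tree into the plane, `p` is a first exit point of
the arm `C` at `x` through the circle of radius `ε` around `φ x`: `p = φ y` for a
point `y ∈ C` at distance exactly `ε`, such that the arc from `x` to `y` stays
within distance `< ε` before reaching `y`. -/
def ExitPt (φ : X → ℝ × ℝ) (x : X) (C : Set X) (ε : ℝ) (p : ℝ × ℝ) : Prop :=
  ∃ y ∈ C, φ y = p ∧ dist (φ x) p = ε ∧
    ∀ z ∈ H.arc x y, z ≠ y → dist (φ x) (φ z) < ε

/-- The local arms at `x` represented by the arms `C, C', C''` are in
counterclockwise cyclic order under the embedding `φ`. -/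
def ArmsCcw (φ : X → ℝ × ℝ) (x : X) (C C' C'' : Set X) : Prop :=
  ∃ ε₀ : ℝ, 0 < ε₀ ∧ ∀ ε : ℝ, 0 < ε → ε < ε₀ →
    ∀ p p' p'' : ℝ × ℝ, H.ExitPt φ x C ε p → H.ExitPt φ x C' ε p' →
      H.ExitPt φ x C'' ε p'' → Ccw p p' p''

/-- `f` respects the cyclic order (induced by the embedding `φ`) of the local arms
at all branch points. -/
def RespectsCyclicOrder (φ : X → ℝ × ℝ) : Prop :=
  ∀ x : X, IsBranchPt x →
    ∀ C C' C'' : Set X, C ∈ arms x → C' ∈ arms x → C'' ∈ arms x →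
      C ≠ C' → C' ≠ C'' → C ≠ C'' → H.ArmsCcw φ x C C' C'' →
      ∀ D D' D'' : Set X, MapsLocalArm H.f x C D → MapsLocalArm H.f x C' D' →
        MapsLocalArm H.f x C'' D'' → H.ArmsCcw φ (H.f x) D D' D''

/-- The Hubbard tree can be topologically embedded into the plane `ℝ²` so that `f`
respects the cyclic order of the local arms at all branch points. -/
def PlanarEmbeddable : Prop :=
  ∃ φ : X → ℝ × ℝ, Topology.IsEmbedding φ ∧ H.RespectsCyclicOrder φ

end HubbardTree

/-!
Everything rests on two facts about a periodic critical point: every endpoint of the tree is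
precritical, and `c₀` is not a branch point, so that two points have the same symbol exactly when
`c₀` does not separate them.

Suppose that `y` separates `c₀` from `x`. Then `f y` separates `c₀` from `f x` unless it lies on
`[c₀, c₁]`, so `x` cannot reach `c₀` while the orbit of `y` stays away from `[c₀, c₁]`. Applied to
endpoints and to `c₁` this shows that the orbit of `z` meets `[c₀, c₁]`, and that its point `w`
there closest to `c₁` is characteristic. If `z` and `c₁` have itineraries with the same first
`m - 1` entries, so does `w ∈ [z, c₁]`; counting symbols over one period gives agreement of all
entries of the itineraries of `z` and `w`, hence `z = w`.

Conversely, let `z` be a characteristic branch point and follow the arm at `z` towards `c₁` along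
the orbit. Were it to face `c₀` within one period, the return map at `z` would permute the arms of
`c₀` and `c₁`, and no other arm would ever face `c₀`, although each contains a precritical endpoint.
So `f^[j] z` separates `f^[j] c₁` from `c₀` for `j < m`.
-/

open Set

theorem exists_maximal_of_isClosed {X : Type*} [TopologicalSpace X] {K : Set X} (hK : IsCompact K)
    (hne : K.Nonempty) {r : X → X → Prop} (hrefl : ∀ y, r y y)
    (htrans : ∀ {u v w}, r u v → r v w → r u w) (hclosed : ∀ y, IsClosed {w | r y w}) :
    ∃ w ∈ K, ∀ y ∈ K, r w y → r y w := by
  have : Nonempty K := hne.to_subtype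
  have hbdd (c : Set K) (hc : IsChain (fun u v : K => r u v) c) (hcne : c.Nonempty) :
      ∃ ub : K, ∀ u ∈ c, r u ub := by
    have : Nonempty c := hcne.to_subtype
    have : CompactSpace K := isCompact_iff_compactSpace.1 hK
    have hcl (u : c) : IsClosed {w : K | r u.1 w} := (hclosed _).preimage continuous_subtype_val
    have hdir : Directed (· ⊇ ·) fun u : c => {w : K | r u.1 w} := fun u v => by
      have : Std.Refl fun u v : K => r u v := ⟨fun u => hrefl u⟩
      rcases hc.total u.2 v.2 with h | h
      · exact ⟨v, fun w => htrans h, subset_rfl⟩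
      · exact ⟨u, subset_rfl, fun w => htrans h⟩
    obtain ⟨ub, hub⟩ := IsCompact.nonempty_iInter_of_directed_nonempty_isCompact_isClosed _ hdir
      (fun u => ⟨u.1, hrefl _⟩) (fun u => (hcl u).isCompact) hcl
    exact ⟨ub, fun u hu => mem_iInter.1 hub ⟨u, hu⟩⟩
  obtain ⟨w, hw⟩ := exists_maximal_of_nonempty_chains_bounded hbdd htrans
  exact ⟨w, w.2, fun y hy => hw ⟨y, hy⟩⟩

theorem exists_last_of_le {P : ℕ → Prop} {i n : ℕ} (hi : P i) (hin : i ≤ n) :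
    ∃ j ≤ n, P j ∧ ∀ k, j < k → k ≤ n → ¬P k := by
  classical
  exact ⟨_, Nat.findGreatest_le n, Nat.findGreatest_spec hin hi,
    fun k => Nat.findGreatest_is_greatest⟩

/-- Both windows of length `m + 1` contain each letter equally often, so agreement on the first `m`
letters forces agreement on the last one. -/
theorem periodic_of_prefix_eq {α : Type*} {F : ℕ → α} {m k : ℕ}
    (hF : Function.Periodic F (m + 1)) (h : ∀ j < m, F (j + k) = F j) : Function.Periodic F k := by
  classical
  have hcount : (m + 1).count (fun j => F (j + k) = F m) = (m + 1).count (F · = F m) := by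
    have hwindow := (Nat.count_add' (p := (F · = F m)) (m + 1) k).symm.trans (Nat.count_add _ _ _)
    simpa only [add_comm (m + 1), hF _, Nat.add_right_cancel_iff] using hwindow
  have hlast : F (m + k) = F m := by
    have hprefix : m.count (fun j => F (j + k) = F m) = m.count (F · = F m) := by
      simp only [Nat.count_eq_card_filter_range]
      exact congrArg _ (Finset.filter_congr fun j hj => by rw [h j (Finset.mem_range.1 hj)])
    rw [Nat.count_succ, Nat.count_succ, hprefix, if_pos rfl, Nat.add_left_cancel_iff] at hcount
    exact of_not_not fun hne => by simp only [hne, if_false, zero_ne_one] at hcount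
  have hblock (i : ℕ) (hi : i < m + 1) : F (i + k) = F i :=
    (Nat.lt_succ_iff_lt_or_eq.1 hi).elim (h i) fun him => him ▸ hlast
  intro j
  calc F (j + k) = F (j % (m + 1) + k) := by
        rw [← hF.map_mod_nat (j + k), ← hF.map_mod_nat (j % (m + 1) + k), Nat.mod_add_mod]
    _ = F (j % (m + 1)) := hblock _ (Nat.mod_lt _ m.succ_pos)
    _ = F j := hF.map_mod_nat j

theorem exists_iterate_eq_of_mem_periodicPts {α : Type*} {f : α → α} {x : α}
    (hx : x ∈ Function.periodicPts f) (k : ℕ) : ∃ n, f^[n] (f^[k] x) = x := by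
  obtain ⟨p, hp, hpx⟩ := hx
  refine ⟨p * k - k, ?_⟩
  rw [← Function.iterate_add_apply, Nat.sub_add_cancel (Nat.le_mul_of_pos_left k hp)]
  exact hpx.mul_const k

/-! ### Arms -/

section Arms

variable {X : Type*} [TopologicalSpace X] {x y a b p : X} {C : Set X}

theorem mem_armTo_self (h : y ≠ x) : y ∈ armTo x y :=
  mem_connectedComponentIn h

theorem notMem_armTo : x ∉ armTo x y := fun h =>
  connectedComponentIn_subset _ _ h rfl

theorem armTo_self : armTo x x = ∅ :=
  connectedComponentIn_eq_empty (not_not_intro rfl)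

theorem armTo_eq_of_mem (h : b ∈ armTo x a) : armTo x a = armTo x b :=
  connectedComponentIn_eq h

theorem ne_of_mem_armTo (h : b ∈ armTo x a) : a ≠ x := by
  rintro rfl
  exact notMem_empty b (armTo_self (x := a) ▸ h)

theorem mem_armTo_symm (h : b ∈ armTo x a) : a ∈ armTo x b :=
  armTo_eq_of_mem h ▸ mem_armTo_self (ne_of_mem_armTo h)

theorem armTo_mem_arms (h : y ≠ x) : armTo x y ∈ arms x :=
  ⟨y, h, rfl⟩

theorem eq_armTo_of_mem_arms (hC : C ∈ arms x) (hy : y ∈ C) : C = armTo x y := by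
  obtain ⟨w, -, rfl⟩ := hC
  exact armTo_eq_of_mem hy

theorem subset_armTo {S : Set X} (hS : IsPreconnected S) (ha : a ∈ S) (hx : x ∉ S) :
    S ⊆ armTo x a :=
  hS.subset_connectedComponentIn ha (subset_compl_singleton_iff.2 hx)

theorem isClosed_insert_armTo [T1Space X] : IsClosed (insert x (armTo x y)) := by
  rcases eq_or_ne y x with rfl | hy
  · rw [armTo_self, insert_empty_eq]
    exact isClosed_singleton
  have hpre : IsPreconnected (closure (armTo x y) \ {x}) :=
    isPreconnected_connectedComponentIn.subset_closure
      (subset_sdiff_singleton subset_closure notMem_armTo) sdiff_subset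
  have hsub := subset_armTo hpre ⟨subset_closure (mem_armTo_self hy), hy⟩ fun h => h.2 rfl
  rw [← closure_subset_iff_isClosed, insert_eq, closure_union, isClosed_singleton.closure_eq,
    singleton_union]
  exact insert_subset (mem_insert _ _) (sdiff_singleton_subset_iff.1 hsub)

theorem isOpen_armTo [T1Space X] (hfin : (arms x).Finite) : IsOpen (armTo x y) := by
  have hcl : IsClosed ({x} ∪ ⋃ C ∈ arms x \ {armTo x y}, insert x C) := by
    refine isClosed_singleton.union ((hfin.subset sdiff_subset).isClosed_biUnion ?_)
    rintro C ⟨⟨w, -, rfl⟩, -⟩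
    exact isClosed_insert_armTo
  convert hcl.isOpen_compl using 1
  ext w
  simp only [mem_compl_iff, mem_union, mem_singleton_iff, mem_iUnion, mem_insert_iff, not_or,
    exists_prop, not_exists, not_and]
  constructor
  · intro hw
    have hwx : w ≠ x := fun h => notMem_armTo (h ▸ hw)
    exact ⟨hwx, fun C hC => ⟨hwx, fun hwC =>
      hC.2 ((eq_armTo_of_mem_arms hC.1 hwC).trans (armTo_eq_of_mem hw).symm)⟩⟩
  · rintro ⟨hwx, hw⟩
    by_contra hwy
    exact (hw _ ⟨armTo_mem_arms hwx, fun h => hwy (h ▸ mem_armTo_self hwx)⟩).2 (mem_armTo_self hwx)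

theorem isPreconnected_insert_armTo [T1Space X] [PreconnectedSpace X] (hfin : (arms x).Finite) :
    IsPreconnected (insert x (armTo x y)) := by
  rcases eq_or_ne y x with rfl | hy
  · rw [armTo_self, insert_empty_eq]
    exact isPreconnected_singleton
  have hclosure : closure (armTo x y) ⊆ insert x (armTo x y) :=
    closure_minimal (subset_insert _ _) isClosed_insert_armTo
  have hx : x ∈ closure (armTo x y) := by
    by_contra hx
    have hclopen : IsClopen (armTo x y) :=
      ⟨closure_subset_iff_isClosed.1 fun w hw => (hclosure hw).resolve_left fun h => hx (h ▸ hw),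
        isOpen_armTo hfin⟩
    exact notMem_armTo ((hclopen.eq_univ ⟨y, mem_armTo_self hy⟩).symm ▸ mem_univ x)
  exact isPreconnected_connectedComponentIn.subset_closure (subset_insert _ _)
    (insert_subset hx subset_closure)

theorem insert_armTo_subset_armTo [T1Space X] [PreconnectedSpace X] (hfin : (arms x).Finite)
    (hpx : p ≠ x) (hy : y ∉ insert x (armTo x p)) : insert x (armTo x p) ⊆ armTo y p :=
  subset_armTo (isPreconnected_insert_armTo hfin) (mem_insert_of_mem _ (mem_armTo_self hpx)) hy

theorem isEndpoint_of_forall_mem_armTo (hpx : p ≠ x) (h : ∀ y ≠ x, y ∈ armTo x p) :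
    IsEndpoint x := by
  refine ncard_eq_one.2
    ⟨armTo x p, Subset.antisymm ?_ (singleton_subset_iff.2 (armTo_mem_arms hpx))⟩
  rintro C ⟨y, hy, rfl⟩
  exact (armTo_eq_of_mem (h y hy)).symm

/-- The endpoint is a maximal element of `{w | w ∉ armTo x p}` for the order in which `w` is above
`y` when `y = w` or `y` separates `w` from `p`. -/
theorem exists_isEndpoint_notMem_armTo [CompactSpace X] [T1Space X] [PreconnectedSpace X]
    (hfin : ∀ y : X, (arms y).Finite) (hpx : p ≠ x) : ∃ e, IsEndpoint e ∧ e ∉ armTo x p := by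
  have htrans {u v w : X} (huv : v ∉ armTo u p) (hvw : w ∉ armTo v p) : w ∉ armTo u p := by
    intro hw
    rcases eq_or_ne v u with rfl | hvu
    · exact hvw hw
    · exact hvw (insert_armTo_subset_armTo (hfin u) (ne_of_mem_armTo hw)
        (fun h => h.elim hvu huv) (Or.inr hw))
  have hclosed (u : X) : IsClosed {w | w ∉ armTo u p} := (isOpen_armTo (hfin u)).isClosed_compl
  obtain ⟨e, hex, hmax⟩ := exists_maximal_of_isClosed (r := fun u w => w ∉ armTo u p)
    (hclosed x).isCompact ⟨x, notMem_armTo⟩ (fun _ => notMem_armTo) htrans hclosed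
  have hpe : p ≠ e := fun h => hex (h ▸ mem_armTo_self hpx)
  refine ⟨e, isEndpoint_of_forall_mem_armTo hpe fun y hye => ?_, hex⟩
  by_contra hy
  exact hmax y (htrans hex hy) hy
    (insert_armTo_subset_armTo (hfin e) hpe (fun h => h.elim hye hy) (mem_insert _ _))

/-- `x` separates `a` from `b`: the two points lie in different components of `X \ {x}`. -/
def Separates (x a b : X) : Prop :=
  a ≠ x ∧ b ≠ x ∧ armTo x a ≠ armTo x b

theorem not_isEndpoint_iff (hy : y ≠ x) : ¬IsEndpoint x ↔ ∃ a b, Separates x a b := by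
  constructor
  · intro hx
    by_contra! hsep
    refine hx (isEndpoint_of_forall_mem_armTo hy fun w hw => ?_)
    rw [of_not_not fun h => hsep y w ⟨hy, hw, h⟩]
    exact mem_armTo_self hw
  · rintro ⟨a, b, ha, hb, hab⟩ hx
    obtain ⟨C, hC⟩ := ncard_eq_one.1 hx
    have heq {w : X} (hw : w ≠ x) : armTo x w = C :=
      mem_singleton_iff.1 (hC ▸ armTo_mem_arms hw)
    exact hab ((heq ha).trans (heq hb).symm)

theorem isBranchPt_iff (hfin : (arms x).Finite) :
    IsBranchPt x ↔ ∃ a b c, Separates x a b ∧ Separates x a c ∧ Separates x b c := by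
  constructor
  · intro hx
    obtain ⟨_, _, _, ⟨a, ha, rfl⟩, ⟨b, hb, rfl⟩, ⟨c, hc, rfl⟩, hab, hac, hbc⟩ :=
      (two_lt_ncard_iff hfin).1 hx
    exact ⟨a, b, c, ⟨ha, hb, hab⟩, ⟨ha, hc, hac⟩, ⟨hb, hc, hbc⟩⟩
  · rintro ⟨a, b, c, ⟨ha, hb, hab⟩, ⟨-, hc, hac⟩, -, -, hbc⟩
    exact (two_lt_ncard_iff hfin).2 ⟨_, _, _, armTo_mem_arms ha, armTo_mem_arms hb,
      armTo_mem_arms hc, hab, hac, hbc⟩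

theorem IsBranchPt.exists_separates (hx : IsBranchPt x) (ha : a ≠ x) (hb : b ≠ x) :
    ∃ y, Separates x y a ∧ Separates x y b := by
  have hcard : ({armTo x a, armTo x b} : Set (Set X)).ncard < (arms x).ncard :=
    (ncard_insert_le _ _).trans_lt (by rwa [ncard_singleton])
  obtain ⟨_, ⟨y, hy, rfl⟩, hC⟩ := exists_mem_notMem_of_ncard_lt_ncard hcard
  rw [mem_insert_iff, mem_singleton_iff, not_or] at hC
  exact ⟨y, ⟨hy, ha, hC.1⟩, hy, hb, hC.2⟩

end Arms

/-! ### Arcs -/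

/-- A Hausdorff space in which any two points are joined by exactly one arc, with `arc a b` the arc
joining `a` and `b`. The arc function is a parameter, so that the theory applies verbatim to the
field `HubbardTree.arc`. -/
structure IsArcSystem {X : Type*} [TopologicalSpace X] (arc : X → X → Set X) : Prop where
  t2 : T2Space X
  isArcBetween : ∀ a b, IsArcBetween (arc a b) a b
  eq_arc : ∀ {a b A}, IsArcBetween A a b → A = arc a b

theorem IsArcBetween.symm {X : Type*} [TopologicalSpace X] {A : Set X} {a b : X}
    (h : IsArcBetween A a b) : IsArcBetween A b a := by
  rcases h with ⟨rfl, rfl⟩ | ⟨hab, γ, hγ, rfl⟩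
  · exact Or.inl ⟨rfl, rfl⟩
  · exact Or.inr ⟨hab.symm, γ.symm, hγ.comp unitInterval.symmHomeomorph.isEmbedding, γ.symm_range⟩

namespace IsArcSystem

variable {X : Type*} [TopologicalSpace X] {arc : X → X → Set X} {a b c e x y : X}

theorem arc_eq_image (hA : IsArcSystem arc) {g : ℝ → X} (hg : Continuous g) {s t : ℝ} (hst : s ≤ t)
    (hinj : InjOn g (Icc s t)) : arc (g s) (g t) = g '' Icc s t := by
  have := hA.t2
  refine (hA.eq_arc ?_).symm
  rcases hst.eq_or_lt with rfl | hlt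
  · exact Or.inl ⟨rfl, by rw [Icc_self, image_singleton]⟩
  refine Or.inr ⟨fun h => hlt.ne (hinj (left_mem_Icc.2 hst) (right_mem_Icc.2 hst) h), ?_⟩
  have hemb : Topology.IsEmbedding ((Icc s t).domRestrict g) :=
    (hg.continuousOn.domRestrict.isClosedEmbedding hinj.injective).isEmbedding
  refine ⟨⟨⟨(Icc s t).domRestrict g ∘ (iccHomeoI s t hlt).symm, by fun_prop⟩, ?_, ?_⟩, ?_, ?_⟩
  · simp
  · simp
  · exact hemb.comp (iccHomeoI s t hlt).symm.isEmbedding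
  · exact (EquivLike.range_comp _ (iccHomeoI s t hlt).symm).trans (range_domRestrict g _)

theorem exists_param (hA : IsArcSystem arc) (a b : X) (s : ℝ) :
    ∃ t ≥ s, ∃ g : ℝ → X, Continuous g ∧ InjOn g (Icc s t) ∧ g s = a ∧ g t = b := by
  rcases hA.isArcBetween a b with ⟨rfl, -⟩ | ⟨-, γ, hγ, -⟩
  · exact ⟨s, le_rfl, fun _ => a, continuous_const, by simp, rfl, rfl⟩
  · refine ⟨s + 1, (lt_add_one s).le, fun u => γ.extend (u - s), by fun_prop, ?_, by simp, by simp⟩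
    intro u hu v hv huv
    have hmem {w : ℝ} (hw : w ∈ Icc s (s + 1)) : w - s ∈ unitInterval :=
      ⟨sub_nonneg.2 hw.1, sub_le_iff_le_add'.2 hw.2⟩
    simp only [Path.extend_apply _ (hmem hu), Path.extend_apply _ (hmem hv)] at huv
    exact sub_left_injective (congrArg Subtype.val (hγ.injective huv))

theorem arc_self (hA : IsArcSystem arc) (a : X) : arc a a = {a} :=
  (hA.eq_arc (Or.inl ⟨rfl, rfl⟩)).symm

theorem arc_comm (hA : IsArcSystem arc) (a b : X) : arc a b = arc b a :=
  hA.eq_arc (hA.isArcBetween a b).symm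

theorem left_mem (hA : IsArcSystem arc) (a b : X) : a ∈ arc a b := by
  obtain ⟨t, ht, g, hg, hinj, rfl, rfl⟩ := hA.exists_param a b 0
  rw [hA.arc_eq_image hg ht hinj]
  exact mem_image_of_mem g (left_mem_Icc.2 ht)

theorem right_mem (hA : IsArcSystem arc) (a b : X) : b ∈ arc a b :=
  hA.arc_comm a b ▸ hA.left_mem b a

theorem isCompact_arc (hA : IsArcSystem arc) (a b : X) : IsCompact (arc a b) := by
  obtain ⟨t, ht, g, hg, hinj, rfl, rfl⟩ := hA.exists_param a b 0
  rw [hA.arc_eq_image hg ht hinj]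
  exact isCompact_Icc.image hg

theorem isClosed_arc (hA : IsArcSystem arc) (a b : X) : IsClosed (arc a b) :=
  have := hA.t2
  (hA.isCompact_arc a b).isClosed

theorem isPreconnected_arc (hA : IsArcSystem arc) (a b : X) : IsPreconnected (arc a b) := by
  obtain ⟨t, ht, g, hg, hinj, rfl, rfl⟩ := hA.exists_param a b 0
  rw [hA.arc_eq_image hg ht hinj]
  exact isPreconnected_Icc.image g hg.continuousOn

theorem preconnectedSpace (hA : IsArcSystem arc) : PreconnectedSpace X :=
  ⟨isPreconnected_of_forall_pair fun a _ b _ =>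
    ⟨arc a b, subset_univ _, hA.left_mem a b, hA.right_mem a b, hA.isPreconnected_arc a b⟩⟩

theorem arc_subset_left (hA : IsArcSystem arc) (hx : x ∈ arc a b) : arc a x ⊆ arc a b := by
  obtain ⟨t, ht, g, hg, hinj, rfl, rfl⟩ := hA.exists_param a b 0
  rw [hA.arc_eq_image hg ht hinj] at hx ⊢
  obtain ⟨u, hu, rfl⟩ := hx
  have hsub : Icc 0 u ⊆ Icc 0 t := Icc_subset_Icc_right hu.2
  rw [hA.arc_eq_image hg hu.1 (hinj.mono hsub)]
  exact image_mono hsub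

theorem arc_subset_right (hA : IsArcSystem arc) (hx : x ∈ arc a b) : arc x b ⊆ arc a b := by
  rw [hA.arc_comm] at hx
  rw [hA.arc_comm x, hA.arc_comm a]
  exact hA.arc_subset_left hx

theorem mem_arc_of_mem_left (hA : IsArcSystem arc) (hx : x ∈ arc a b) (hy : y ∈ arc a x) :
    x ∈ arc y b := by
  obtain ⟨t, ht, g, hg, hinj, rfl, rfl⟩ := hA.exists_param a b 0
  rw [hA.arc_eq_image hg ht hinj] at hx
  obtain ⟨u, hu, rfl⟩ := hx
  rw [hA.arc_eq_image hg hu.1 (hinj.mono (Icc_subset_Icc_right hu.2))] at hy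
  obtain ⟨v, hv, rfl⟩ := hy
  rw [hA.arc_eq_image hg (hv.2.trans hu.2) (hinj.mono (Icc_subset_Icc_left hv.1))]
  exact mem_image_of_mem g ⟨hv.2, hu.2⟩

theorem mem_arc_of_mem_right (hA : IsArcSystem arc) (hx : x ∈ arc a b) (hy : y ∈ arc x b) :
    x ∈ arc a y := by
  rw [hA.arc_comm] at hx hy ⊢
  exact hA.mem_arc_of_mem_left hx hy

theorem antisymm (hA : IsArcSystem arc) (hx : x ∈ arc a y) (hy : y ∈ arc a x) : x = y :=
  mem_singleton_iff.1 (hA.arc_self y ▸ hA.mem_arc_of_mem_left hx hy)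

theorem eq_of_mem_left_of_mem_right (hA : IsArcSystem arc) (hx : x ∈ arc a b) (hya : y ∈ arc a x)
    (hyb : y ∈ arc x b) : y = x :=
  (hA.antisymm (hA.mem_arc_of_mem_right hx hyb) hya).symm

theorem exists_farthest (hA : IsArcSystem arc) {K : Set X} (hK : IsClosed K)
    (hne : (K ∩ arc a b).Nonempty) :
    ∃ w ∈ K ∩ arc a b, ∀ y ∈ K ∩ arc a b, y ∈ arc a w := by
  obtain ⟨t, ht, g, hg, hinj, rfl, rfl⟩ := hA.exists_param a b 0
  rw [hA.arc_eq_image hg ht hinj] at hne ⊢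
  obtain ⟨_, hK₀, u₀, hu₀, rfl⟩ := hne
  obtain ⟨u, ⟨hu, huK⟩, hmax⟩ :=
    (isCompact_Icc.inter_right (hK.preimage hg)).exists_isGreatest ⟨u₀, hu₀, hK₀⟩
  refine ⟨g u, ⟨huK, mem_image_of_mem g hu⟩, ?_⟩
  rintro _ ⟨hvK, v, hv, rfl⟩
  rw [hA.arc_eq_image hg hu.1 (hinj.mono (Icc_subset_Icc_right hu.2))]
  exact mem_image_of_mem g ⟨hv.1, hmax ⟨hv, hvK⟩⟩

theorem arc_eq_union (hA : IsArcSystem arc) (h : arc a b ∩ arc b c ⊆ {b}) :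
    arc a c = arc a b ∪ arc b c := by
  obtain ⟨t, ht, g, hg, ginj, rfl, hgt⟩ := hA.exists_param a b 0
  obtain ⟨u, hu, k, hk, kinj, hkt, rfl⟩ := hA.exists_param b c t
  subst hkt
  let F : ℝ → X := fun v => if v ≤ t then g v else k v
  have hF : Continuous F :=
    hg.if_le hk continuous_id continuous_const fun v hv => by rw [show v = t from hv, hgt]
  have hFg : EqOn F g (Icc 0 t) := fun v hv => if_pos hv.2
  have hFk : EqOn F k (Icc t u) := fun v hv => by
    rcases hv.1.eq_or_lt with rfl | htv
    · exact (if_pos le_rfl).trans hgt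
    · exact if_neg htv.not_ge
  have hFinj : InjOn F (Icc 0 u) := by
    rw [← Icc_union_Ioc_eq_Icc ht hu]
    refine (injOn_union (disjoint_left.2 fun v hv hw => hw.1.not_ge hv.2)).2
      ⟨ginj.congr hFg.symm, (kinj.congr hFk.symm).mono Ioc_subset_Icc_self, fun v hv w hw hvw => ?_⟩
    rw [hFg hv, hFk (Ioc_subset_Icc_self hw)] at hvw
    have hkw : k w ∈ arc (g 0) (k t) ∩ arc (k t) (k u) := by
      rw [← hgt, hA.arc_eq_image hg ht ginj, hgt, hA.arc_eq_image hk hu kinj]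
      exact ⟨⟨v, hv, hvw⟩, mem_image_of_mem k (Ioc_subset_Icc_self hw)⟩
    exact hw.1.ne' (kinj (Ioc_subset_Icc_self hw) (left_mem_Icc.2 hu) (h hkw))
  calc arc (g 0) (k u) = arc (F 0) (F u) := by
        rw [hFg (left_mem_Icc.2 ht), hFk (right_mem_Icc.2 hu)]
    _ = F '' Icc 0 t ∪ F '' Icc t u := by
        rw [hA.arc_eq_image hF (ht.trans hu) hFinj, ← image_union, Icc_union_Icc_eq_Icc ht hu]
    _ = arc (g 0) (k t) ∪ arc (k t) (k u) := by
        rw [hFg.image_eq, hFk.image_eq, ← hA.arc_eq_image hg ht ginj, hgt,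
          ← hA.arc_eq_image hk hu kinj]

theorem mem_arc_or_mem_arc (hA : IsArcSystem arc) (b : X) (hx : x ∈ arc a c) :
    x ∈ arc a b ∨ x ∈ arc b c := by
  obtain ⟨d, ⟨hdc, hda⟩, hfar⟩ := hA.exists_farthest (hA.isClosed_arc b c)
    ⟨b, hA.left_mem b c, hA.left_mem b a⟩
  have hunion : arc a c = arc a d ∪ arc d c := by
    refine hA.arc_eq_union fun y hy => ?_
    rw [hA.arc_comm a d] at hy
    exact hA.eq_of_mem_left_of_mem_right hda
      (hfar y ⟨hA.arc_subset_right hdc hy.2, hA.arc_subset_right hda hy.1⟩) hy.1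
  rw [hunion, hA.arc_comm a d] at hx
  rw [hA.arc_comm a b]
  exact hx.imp (hA.arc_subset_right hda ·) (hA.arc_subset_right hdc ·)

theorem mem_arc_iff_of_mem_arc (hA : IsArcSystem arc) (a : X) (hy : y ∈ arc x e) (hyx : y ≠ x) :
    x ∈ arc a y ↔ x ∈ arc a e := by
  have hx : x ∉ arc e y := fun hx => hyx (hA.antisymm (hA.arc_comm x e ▸ hy) hx)
  exact ⟨fun h => (hA.mem_arc_or_mem_arc e h).resolve_right hx,
    fun h => (hA.mem_arc_or_mem_arc y h).resolve_right (hA.arc_comm y e ▸ hx)⟩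

theorem exists_mem_arc_of_locally_injOn (hA : IsArcSystem arc) {h : ℝ → X} (hcont : Continuous h)
    {s t u : ℝ} (hu : u ∈ Ioo s t) {U : Set ℝ} (hU : U ∈ nhds u) (hinj : InjOn h U) (p : X) :
    ∃ v ∈ Icc s t, h v ≠ h u ∧ h u ∈ arc p (h v) := by
  obtain ⟨δ, hδ, hsub⟩ := Metric.nhds_basis_closedBall.mem_iff.1
    (Filter.inter_mem (Icc_mem_nhds hu.1 hu.2) hU)
  rw [Real.closedBall_eq_Icc, subset_inter_iff] at hsub
  have hlt : u - δ < u := sub_lt_self u hδ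
  have hgt : u < u + δ := lt_add_of_pos_right u hδ
  have hne {v : ℝ} (hv : v ∈ Icc (u - δ) (u + δ)) (hvu : v ≠ u) : h v ≠ h u :=
    fun h => hvu (hinj (hsub.2 hv) (hsub.2 ⟨hlt.le, hgt.le⟩) h)
  have hmem : h u ∈ arc (h (u - δ)) (h (u + δ)) := by
    rw [hA.arc_eq_image hcont (hlt.trans hgt).le (hinj.mono hsub.2)]
    exact mem_image_of_mem h ⟨hlt.le, hgt.le⟩
  have hl : u - δ ∈ Icc (u - δ) (u + δ) := left_mem_Icc.2 (hlt.trans hgt).le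
  have hr : u + δ ∈ Icc (u - δ) (u + δ) := right_mem_Icc.2 (hlt.trans hgt).le
  rcases hA.mem_arc_or_mem_arc p hmem with hleft | hright
  · exact ⟨u - δ, hsub.1 hl, hne hl hlt.ne, hA.arc_comm p _ ▸ hleft⟩
  · exact ⟨u + δ, hsub.1 hr, hne hr hgt.ne', hright⟩

theorem mem_armTo_of_notMem_arc (hA : IsArcSystem arc) (hx : x ∉ arc a b) : b ∈ armTo x a :=
  subset_armTo (hA.isPreconnected_arc a b) (hA.left_mem a b) hx (hA.right_mem a b)

theorem armTo_eq_of_mem_arc (hA : IsArcSystem arc) (hy : y ∈ arc x a) (hyx : y ≠ x) :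
    armTo x y = armTo x a :=
  armTo_eq_of_mem (hA.mem_armTo_of_notMem_arc fun hx =>
    hyx (hA.antisymm (hA.arc_comm x a ▸ hy) (hA.arc_comm y a ▸ hx)))

theorem exists_common_germ (hA : IsArcSystem arc) (hax : a ≠ x) (hx : x ∉ arc a b) :
    ∃ y ≠ x, y ∈ arc x a ∧ y ∈ arc x b := by
  by_contra! hcon
  have hcover : arc x a ⊆ {x} ∪ arc a b := fun y hy => or_iff_not_imp_left.2 fun hyx => by
    rw [hA.arc_comm a b]
    exact (hA.mem_arc_or_mem_arc b hy).resolve_left (hcon y hyx hy)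
  have := hA.t2
  rcases (isPreconnected_iff_subset_of_fully_disjoint_closed (hA.isClosed_arc x a)).1
    (hA.isPreconnected_arc x a) _ _ isClosed_singleton (hA.isClosed_arc a b) hcover
    (disjoint_singleton_left.2 hx) with hsub | hsub
  · exact hax (hsub (hA.right_mem x a))
  · exact hx (hsub (hA.left_mem x a))

end IsArcSystem

/-! ### Finite trees -/

/-- A compact tree in which every point has finitely many arms and which has finitely many
endpoints. -/
structure IsFiniteTree {X : Type*} [TopologicalSpace X] (arc : X → X → Set X) : Prop
    extends IsArcSystem arc where
  compact : CompactSpace X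
  arms_finite : ∀ x : X, (arms x).Finite
  endpoint_finite : {x : X | IsEndpoint x}.Finite

namespace IsFiniteTree

variable {X : Type*} [TopologicalSpace X] {arc : X → X → Set X} {a b x y : X}

theorem exists_isEndpoint_mem_arc (hT : IsFiniteTree arc) (hax : a ≠ x) :
    ∃ e, IsEndpoint e ∧ x ∈ arc a e := by
  have := hT.compact
  have := hT.t2
  have := hT.preconnectedSpace
  obtain ⟨e, he, hxe⟩ := exists_isEndpoint_notMem_armTo hT.arms_finite hax
  exact ⟨e, he, not_imp_comm.1 hT.mem_armTo_of_notMem_arc hxe⟩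

theorem isClosed_insert_of_mem_arc (hT : IsFiniteTree arc) {S : Set X}
    (hS : ∀ e, ∀ y ∈ arc x e, y ≠ x → (y ∈ S ↔ e ∈ S)) : IsClosed (insert x S) := by
  have := hT.t2
  have hunion : insert x S = {x} ∪ ⋃ e ∈ {e | IsEndpoint e ∧ e ∈ S}, arc x e := by
    ext y
    simp only [mem_insert_iff, mem_union, mem_singleton_iff, mem_iUnion, mem_ofPred_eq, exists_prop]
    refine or_congr_right' fun hyx => ⟨fun hy => ?_, fun ⟨e, he, hye⟩ => (hS e y hye hyx).2 he.2⟩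
    obtain ⟨e, he, hye⟩ := hT.exists_isEndpoint_mem_arc (Ne.symm hyx)
    exact ⟨e, ⟨he, (hS e y hye hyx).1 hy⟩, hye⟩
  rw [hunion]
  exact isClosed_singleton.union
    ((hT.endpoint_finite.subset fun _ he => he.1).isClosed_biUnion fun e _ => hT.isClosed_arc x e)

theorem isClosed_setOf_mem_arc (hT : IsFiniteTree arc) (a x : X) : IsClosed {y | x ∈ arc a y} := by
  rw [← insert_eq_of_mem (show x ∈ {y | x ∈ arc a y} from hT.right_mem a x)]
  exact hT.isClosed_insert_of_mem_arc fun e y hy hyx => hT.mem_arc_iff_of_mem_arc a hy hyx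

theorem mem_armTo_iff (hT : IsFiniteTree arc) : b ∈ armTo x a ↔ x ∉ arc a b := by
  refine ⟨fun hb hx => ?_, hT.mem_armTo_of_notMem_arc⟩
  have hax := ne_of_mem_armTo hb
  have hfar := hT.isClosed_setOf_mem_arc a x
  have hnear : IsClosed (insert x {y | x ∉ arc a y}) := hT.isClosed_insert_of_mem_arc
    fun e y hy hyx => not_congr (hT.mem_arc_iff_of_mem_arc a hy hyx)
  have hdisj : armTo x a ∩ ({y | x ∈ arc a y} ∩ insert x {y | x ∉ arc a y}) = ∅ :=
    eq_empty_of_forall_notMem fun y hy =>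
      hy.2.2.elim (fun h => notMem_armTo (h ▸ hy.1)) fun h => h hy.2.1
  rcases isPreconnected_iff_subset_of_disjoint_closed.1 isPreconnected_connectedComponentIn _ _
    hfar hnear (fun y _ => (em _).imp_right (mem_insert_of_mem x)) hdisj with hsub | hsub
  · have hxa : x ∈ arc a a := hsub (mem_armTo_self hax)
    exact hax (mem_singleton_iff.1 (hT.arc_self a ▸ hxa)).symm
  · exact (hsub hb).elim (fun h => notMem_armTo (h ▸ hb)) fun h => h hx

theorem separates_iff (hT : IsFiniteTree arc) :
    Separates x a b ↔ a ≠ x ∧ b ≠ x ∧ x ∈ arc a b := by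
  refine and_congr_right fun _ => and_congr_right fun hb => ?_
  rw [← not_iff_not, ← hT.mem_armTo_iff, not_not]
  exact ⟨fun h => h ▸ mem_armTo_self hb, armTo_eq_of_mem⟩

theorem mem_armTo_of_notMem_armTo (hT : IsFiniteTree arc) (hxa : x ≠ a) (hb : b ∉ armTo x a) :
    b ∈ armTo a x := by
  rw [hT.mem_armTo_iff, not_not, hT.arc_comm] at hb
  exact hT.mem_armTo_iff.2 fun ha => hxa (hT.antisymm hb (hT.arc_comm x b ▸ ha))

theorem exists_isEndpoint_mem_armTo (hT : IsFiniteTree arc) (hyx : y ≠ x) :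
    ∃ e, IsEndpoint e ∧ e ∈ armTo x y := by
  obtain ⟨e, he, hy⟩ := hT.exists_isEndpoint_mem_arc hyx.symm
  have hex : e ≠ x := fun h => hyx (mem_singleton_iff.1 (hT.arc_self x ▸ h ▸ hy))
  exact ⟨e, he, hT.armTo_eq_of_mem_arc hy hyx ▸ mem_armTo_self hex⟩

/-- A loop `h` would have to turn back at a point farthest from its base point `h s`. -/
theorem ne_of_locally_injOn (hT : IsFiniteTree arc) {h : ℝ → X} (hcont : Continuous h) {s t : ℝ}
    (hst : s < t) (hloc : ∀ u ∈ Ioo s t, ∃ U ∈ nhds u, InjOn h U) : h s ≠ h t := by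
  intro heq
  have hfurther (u : ℝ) (hu : u ∈ Ioo s t) : ∃ v ∈ Icc s t, h v ≠ h u ∧ h u ∈ arc (h s) (h v) := by
    obtain ⟨U, hU, hinj⟩ := hloc u hu
    exact hT.exists_mem_arc_of_locally_injOn hcont hu hU hinj (h s)
  obtain ⟨u₀, hu₀, hne⟩ : ∃ u ∈ Icc s t, h u ≠ h s := by
    obtain ⟨u, hu⟩ := exists_between hst
    obtain ⟨v, hv, hvu, -⟩ := hfurther u hu
    by_contra! hconst
    exact hvu ((hconst v hv).trans (hconst u (Ioo_subset_Icc_self hu)).symm)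
  obtain ⟨_, ⟨⟨u, hu, rfl⟩, hu₀u⟩, hmax⟩ := exists_maximal_of_isClosed
    (r := fun y w => y ∈ arc (h s) w)
    ((isCompact_Icc.image hcont).inter_right (hT.isClosed_setOf_mem_arc (h s) (h u₀)))
    ⟨h u₀, mem_image_of_mem h hu₀, hT.right_mem _ _⟩ (hT.right_mem _)
    (fun huv hvw => hT.arc_subset_left hvw huv) (hT.isClosed_setOf_mem_arc _)
  have hus : h u ≠ h s := fun hus => hne (mem_singleton_iff.1 (hT.arc_self (h s) ▸ hus ▸ hu₀u))
  have huIoo : u ∈ Ioo s t :=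
    ⟨hu.1.lt_of_ne' fun hs => hus (hs ▸ rfl), hu.2.lt_of_ne fun ht => hus (ht ▸ heq.symm)⟩
  obtain ⟨v, hv, hvu, huv⟩ := hfurther u huIoo
  exact hvu (hT.antisymm
    (hmax (h v) ⟨mem_image_of_mem h hv, hT.arc_subset_left huv hu₀u⟩ huv) huv)

theorem injOn_Icc_of_locally_injOn (hT : IsFiniteTree arc) {h : ℝ → X} (hcont : Continuous h)
    {s t : ℝ} (hloc : ∀ u ∈ Ioo s t, ∃ U ∈ nhds u, InjOn h U) : InjOn h (Icc s t) := by
  have hne {u v : ℝ} (hu : s ≤ u) (huv : u < v) (hv : v ≤ t) : h u ≠ h v :=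
    hT.ne_of_locally_injOn hcont huv fun w hw => hloc w ⟨hu.trans_lt hw.1, hw.2.trans_le hv⟩
  intro u hu v hv huv
  rcases lt_trichotomy u v with hlt | rfl | hlt
  · exact absurd huv (hne hu.1 hlt hv.2)
  · rfl
  · exact absurd huv.symm (hne hv.1 hlt hu.2)

end IsFiniteTree

/-! ### Local dynamics of a Hubbard tree -/

namespace HubbardTree

variable {X : Type*} [TopologicalSpace X] (H : HubbardTree X) {a b x y : X}

theorem isFiniteTree : IsFiniteTree H.arc where
  t2 := H.t2
  isArcBetween := H.arc_isArc
  eq_arc := H.arc_unique _ _ _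
  compact := H.compact
  arms_finite := H.arms_finite
  endpoint_finite := H.endpoint_finite

theorem exists_param_injOn_comp_f (h : H.c0 ∉ H.arc a b \ {a, b}) :
    ∃ t ≥ 0, ∃ g : ℝ → X, Continuous g ∧ InjOn g (Icc 0 t) ∧ g 0 = a ∧ g t = b ∧
      InjOn (H.f ∘ g) (Icc 0 t) := by
  have hT := H.isFiniteTree
  obtain ⟨t, ht, g, hg, hinj, rfl, rfl⟩ := hT.exists_param a b 0
  refine ⟨t, ht, g, hg, hinj, rfl, rfl,
    hT.injOn_Icc_of_locally_injOn (H.cont.comp hg) fun u hu => ?_⟩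
  have huIcc := Ioo_subset_Icc_self hu
  have hgu : g u ≠ H.c0 := by
    intro hc
    refine h (hc ▸ ⟨?_, ?_⟩)
    · rw [hT.arc_eq_image hg ht hinj]
      exact mem_image_of_mem g huIcc
    · rintro (h₀ | h₁)
      · exact hu.1.ne' (hinj huIcc (left_mem_Icc.2 ht) h₀)
      · exact hu.2.ne (hinj huIcc (right_mem_Icc.2 ht) h₁)
  obtain ⟨U, hU, hguU, hemb⟩ := H.local_homeo (g u) hgu
  refine ⟨Icc 0 t ∩ g ⁻¹' U, Filter.inter_mem (Icc_mem_nhds hu.1 hu.2)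
    (hg.continuousAt.preimage_mem_nhds (hU.mem_nhds hguU)), ?_⟩
  exact (injOn_iff_injective.2 hemb.injective).comp (hinj.mono inter_subset_left)
    fun v hv => hv.2

theorem injOn_arc (h : H.c0 ∉ H.arc a b \ {a, b}) : InjOn H.f (H.arc a b) := by
  obtain ⟨t, ht, g, hg, hinj, rfl, rfl, hfg⟩ := H.exists_param_injOn_comp_f h
  rw [H.isFiniteTree.arc_eq_image hg ht hinj]
  exact hfg.image_of_comp

theorem image_arc (h : H.c0 ∉ H.arc a b \ {a, b}) : H.f '' H.arc a b = H.arc (H.f a) (H.f b) := by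
  obtain ⟨t, ht, g, hg, hinj, rfl, rfl, hfg⟩ := H.exists_param_injOn_comp_f h
  rw [H.isFiniteTree.arc_eq_image hg ht hinj, ← image_comp]
  exact (H.isFiniteTree.arc_eq_image (H.cont.comp hg) ht hfg).symm

open Classical in
/-- A point of the arm at `x` containing `y` such that `f` is injective on the arc joining it to
`x`: the point `y` itself unless `y` lies on the side of `c₀`, in which case the arc is cut
at `c₀`. -/
noncomputable def truncate (x y : X) : X :=
  if y ∈ armTo x H.c0 then H.c0 else y

theorem armTo_truncate : armTo x (H.truncate x y) = armTo x y := by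
  unfold truncate
  split_ifs with h
  · exact armTo_eq_of_mem h
  · rfl

theorem truncate_ne (hx : x ≠ H.c0) (hy : y ≠ x) : H.truncate x y ≠ x := by
  unfold truncate
  split_ifs
  exacts [hx.symm, hy]

theorem truncate_eq_c0 (hx : x ≠ H.c0) (h : H.c0 ∈ H.arc x (H.truncate x y)) :
    H.truncate x y = H.c0 := by
  have hT := H.isFiniteTree
  unfold truncate at h ⊢
  split_ifs at h ⊢ with hy
  · rfl
  · exact absurd h (hT.mem_armTo_iff.1 (hT.mem_armTo_of_notMem_armTo hx hy))

/-- A point of the arm at `f x` to which the germ of `f` at `x ≠ c₀` sends the arm at `x`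
containing `y`. -/
noncomputable def armMap (x y : X) : X := H.f (H.truncate x y)

theorem separates_map (hx : x ≠ H.c0) (h : Separates x a b) :
    Separates (H.f x) (H.armMap x a) (H.armMap x b) := by
  have hT := H.isFiniteTree
  have hsep : Separates x (H.truncate x a) (H.truncate x b) :=
    ⟨H.truncate_ne hx h.1, H.truncate_ne hx h.2.1, by simpa only [armTo_truncate] using h.2.2⟩
  obtain ⟨ha, hb, hmem⟩ := hT.separates_iff.1 hsep
  have hcrit : H.c0 ∉ H.arc (H.truncate x a) (H.truncate x b) \
      {H.truncate x a, H.truncate x b} := by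
    rintro ⟨hc, hne⟩
    rcases hT.mem_arc_or_mem_arc x hc with hc | hc
    · exact hne (Or.inl (H.truncate_eq_c0 hx (hT.arc_comm x _ ▸ hc)).symm)
    · exact hne (Or.inr (H.truncate_eq_c0 hx hc).symm)
  have hinj := H.injOn_arc hcrit
  exact hT.separates_iff.2 ⟨fun he => ha (hinj (hT.left_mem _ _) hmem he),
    fun he => hb (hinj (hT.right_mem _ _) hmem he), H.image_arc hcrit ▸ mem_image_of_mem _ hmem⟩

theorem isBranchPt_map (hx : x ≠ H.c0) (h : IsBranchPt x) : IsBranchPt (H.f x) := by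
  rw [isBranchPt_iff (H.arms_finite _)] at h ⊢
  obtain ⟨a, b, c, hab, hac, hbc⟩ := h
  exact ⟨_, _, _, H.separates_map hx hab, H.separates_map hx hac, H.separates_map hx hbc⟩

theorem not_isEndpoint_map (hx : x ≠ H.c0) (h : ¬IsEndpoint x) : ¬IsEndpoint (H.f x) := by
  obtain ⟨a, b, hab⟩ := (not_isEndpoint_iff hx.symm).1 h
  have hsep := H.separates_map hx hab
  exact (not_isEndpoint_iff hsep.1).2 ⟨_, _, hsep⟩

variable {H}

theorem exists_iterate_eq_c0 (hc0 : H.c0 ∈ Function.periodicPts H.f) (hx : IsEndpoint x) :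
    ∃ n, H.f^[n] x = H.c0 := by
  obtain ⟨k, rfl⟩ := H.endpoints_on_orbit x hx
  exact exists_iterate_eq_of_mem_periodicPts hc0 k

/-- Otherwise no point of the critical orbit is an endpoint. -/
theorem isEndpoint_c1 (hc0 : H.c0 ∈ Function.periodicPts H.f) : IsEndpoint H.c1 := by
  by_contra hc1
  have horbit (k : ℕ) : ¬IsEndpoint (H.f^[k] H.c1) := by
    induction k with
    | zero => exact hc1
    | succ k ih =>
      rw [Function.iterate_succ_apply']
      by_cases hk : H.f^[k] H.c1 = H.c0
      · rwa [hk]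
      · exact H.not_isEndpoint_map hk ih
  obtain ⟨e, he, -⟩ := H.isFiniteTree.exists_isEndpoint_mem_arc H.crit_not_fixed
  obtain ⟨k, rfl⟩ := H.endpoints_on_orbit e he
  obtain ⟨p, hp, hpc⟩ := hc0
  refine horbit (k + (p - 1)) ?_
  rwa [Function.iterate_add_apply, c1, ← Function.iterate_succ_apply, Nat.succ_eq_add_one,
    Nat.sub_add_cancel hp, hpc]

/-- Near the endpoint `c₁` the images of all arms at `c₀` coincide, and a point there has at most
two preimages. -/
theorem not_isBranchPt_c0 (hc0 : H.c0 ∈ Function.periodicPts H.f) : ¬IsBranchPt H.c0 := by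
  have hT := H.isFiniteTree
  have hnotMem {p q : X} (hp : p ≠ H.c1) (hq : q ≠ H.c1) : H.c1 ∉ H.arc p q := fun h =>
    (not_isEndpoint_iff hp).2 ⟨p, q, hT.separates_iff.2 ⟨hp, hq, h⟩⟩ (isEndpoint_c1 hc0)
  have hcrit (a : X) : H.c0 ∉ H.arc H.c0 a \ {H.c0, a} := fun h => h.2 (Or.inl rfl)
  have hne {a : X} (ha : a ≠ H.c0) : H.f a ≠ H.c1 := fun h =>
    ha (H.injOn_arc (hcrit a) (hT.right_mem _ _) (hT.left_mem _ _) h)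
  rw [isBranchPt_iff (H.arms_finite _)]
  rintro ⟨a, b, c, ⟨ha, hb, hab⟩, ⟨-, hc, hac⟩, -, -, hbc⟩
  obtain ⟨w, hw, hwa, hwb⟩ := hT.exists_common_germ (hne ha) (hnotMem (hne ha) (hne hb))
  obtain ⟨v, hv, hvw, hvc⟩ := hT.exists_common_germ hw (hnotMem hw (hne hc))
  have hpre {a : X} (hva : v ∈ H.arc H.c1 (H.f a)) :
      ∃ x, H.f x = v ∧ armTo H.c0 x = armTo H.c0 a := by
    rw [c1, ← H.image_arc (hcrit a)] at hva
    obtain ⟨x, hx, rfl⟩ := hva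
    exact ⟨x, rfl, hT.armTo_eq_of_mem_arc hx fun h => hv (congrArg H.f h)⟩
  obtain ⟨xa, hxa, hxa'⟩ := hpre (hT.arc_subset_left hwa hvw)
  obtain ⟨xb, hxb, hxb'⟩ := hpre (hT.arc_subset_left hwb hvw)
  obtain ⟨xc, hxc, hxc'⟩ := hpre hvc
  obtain ⟨p, q, hpq⟩ := H.two_preimages v
  have hxa'' := hpq hxa
  have hxb'' := hpq hxb
  have hxc'' := hpq hxc
  simp only [mem_insert_iff, mem_singleton_iff] at hxa'' hxb'' hxc''
  grind

/-! ### Itineraries and characteristic points -/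

variable {w z : X} {k l m n : ℕ}

theorem symOf_eq_star_iff : H.symOf x = Sym.star ↔ x = H.c0 := by
  unfold symOf
  split_ifs with hx <;> simp [hx]

theorem T1_eq_armTo : H.T1 = armTo H.c0 H.c1 := rfl

theorem symOf_eq_of_mem_armTo (h : b ∈ armTo H.c0 a) : H.symOf a = H.symOf b := by
  have ha : a ≠ H.c0 := ne_of_mem_armTo h
  have hb : b ≠ H.c0 := ne_of_mem_armTo (mem_armTo_symm h)
  have hT1 : a ∈ H.T1 ↔ b ∈ H.T1 := by
    rw [T1_eq_armTo]
    exact ⟨fun haT => armTo_eq_of_mem haT ▸ h, fun hbT => armTo_eq_of_mem hbT ▸ mem_armTo_symm h⟩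
  classical
  rw [symOf, symOf, if_neg ha, if_neg hb]
  exact if_congr hT1 rfl rfl

theorem c0_mem_periodicPts (h : H.kneading n = Sym.star) : H.c0 ∈ Function.periodicPts H.f :=
  ⟨n - 1 + 1, Nat.succ_pos _, symOf_eq_star_iff.1 h⟩

theorem exists_iterate_c1_eq_c0 (hc0 : H.c0 ∈ Function.periodicPts H.f) :
    ∃ n, H.f^[n] H.c1 = H.c0 :=
  exists_iterate_eq_of_mem_periodicPts hc0 1

theorem mem_armTo_of_symOf_eq (hc0 : H.c0 ∈ Function.periodicPts H.f) (ha : a ≠ H.c0)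
    (h : H.symOf a = H.symOf b) : b ∈ armTo H.c0 a := by
  have hb : b ≠ H.c0 := fun hb => ha (symOf_eq_star_iff.1 (h.trans (symOf_eq_star_iff.2 hb)))
  have hT1 : a ∈ armTo H.c0 H.c1 ↔ b ∈ armTo H.c0 H.c1 := by
    rw [← T1_eq_armTo]
    unfold symOf at h
    rw [if_neg ha, if_neg hb] at h
    split_ifs at h with haT hbT hbT <;> simp only [haT, hbT]
  by_contra hab
  refine not_isBranchPt_c0 hc0 ((isBranchPt_iff (H.arms_finite _)).2 ⟨H.c1, a, b,
    ⟨H.crit_not_fixed, ha, fun he => ?_⟩, ⟨H.crit_not_fixed, hb, fun he => ?_⟩,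
    ha, hb, fun he => hab (he ▸ mem_armTo_self hb)⟩)
  · exact hab (he ▸ hT1.1 (he ▸ mem_armTo_self ha))
  · have haT := hT1.2 (he ▸ mem_armTo_self hb)
    exact hab (armTo_eq_of_mem haT ▸ he ▸ mem_armTo_self hb)

theorem map_mem_arc (hx : x ∈ H.arc a b) (h : H.c0 ∉ H.arc a b \ {a, b}) :
    H.f x ∈ H.arc (H.f a) (H.f b) :=
  H.image_arc h ▸ mem_image_of_mem H.f hx

theorem iterate_mem_arc (hx : x ∈ H.arc a b)
    (h : ∀ j < k, H.c0 ∉ H.arc (H.f^[j] a) (H.f^[j] b)) :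
    H.f^[k] x ∈ H.arc (H.f^[k] a) (H.f^[k] b) := by
  induction k with
  | zero => exact hx
  | succ k ih =>
    simp only [Function.iterate_succ_apply']
    exact map_mem_arc (ih fun j hj => h j (hj.trans k.lt_succ_self))
      fun hmem => h k k.lt_succ_self hmem.1

theorem isBranchPt_iterate (hc0 : H.c0 ∈ Function.periodicPts H.f) (hx : IsBranchPt x) (k : ℕ) :
    IsBranchPt (H.f^[k] x) := by
  induction k with
  | zero => exact hx
  | succ k ih =>
    rw [Function.iterate_succ_apply']
    exact H.isBranchPt_map (fun h => not_isBranchPt_c0 hc0 (h ▸ ih)) ih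

theorem iterate_ne_c0_of_isBranchPt (hc0 : H.c0 ∈ Function.periodicPts H.f) (hx : IsBranchPt x)
    (k : ℕ) : H.f^[k] x ≠ H.c0 := fun h =>
  not_isBranchPt_c0 hc0 (h ▸ isBranchPt_iterate hc0 hx k)

theorem exists_symOf_iterate_ne (hc0 : H.c0 ∈ Function.periodicPts H.f) (hx : IsBranchPt x)
    (hy : IsBranchPt y) (hxy : x ≠ y) : ∃ n, H.symOf (H.f^[n] x) ≠ H.symOf (H.f^[n] y) := by
  by_contra! hsym
  have hnotMem (j : ℕ) : H.c0 ∉ H.arc (H.f^[j] x) (H.f^[j] y) :=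
    H.isFiniteTree.mem_armTo_iff.1 (mem_armTo_of_symOf_eq hc0
      (iterate_ne_c0_of_isBranchPt hc0 hx j) (hsym j))
  obtain ⟨n, w, hw, hwn⟩ := H.expansive x y hxy (Or.inl hx) (Or.inl hy)
  exact hnotMem n (hwn ▸ iterate_mem_arc hw fun j _ => hnotMem j)

theorem symOf_iterate_eq_of_mem_arc (hc0 : H.c0 ∈ Function.periodicPts H.f)
    (ha : ∀ j < n, H.f^[j] a ≠ H.c0)
    (hsym : ∀ j < n, H.symOf (H.f^[j] a) = H.symOf (H.f^[j] b)) (hx : x ∈ H.arc a b) (hk : k < n) :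
    H.symOf (H.f^[k] x) = H.symOf (H.f^[k] a) := by
  have hT := H.isFiniteTree
  have hnotMem (j : ℕ) (hj : j < n) : H.c0 ∉ H.arc (H.f^[j] a) (H.f^[j] b) :=
    hT.mem_armTo_iff.1 (mem_armTo_of_symOf_eq hc0 (ha j hj) (hsym j hj))
  have hmem := iterate_mem_arc hx fun j hj => hnotMem j (hj.trans hk)
  exact (symOf_eq_of_mem_armTo (hT.mem_armTo_iff.2 fun h =>
    hnotMem k hk (hT.arc_subset_left hmem h))).symm

theorem isCharacteristic_iff : H.IsCharacteristic z ↔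
    Separates z H.c0 H.c1 ∧ ∀ k, H.f^[k] z ≠ z → H.f^[k] z ∈ armTo z H.c0 := by
  constructor
  · rintro ⟨_, _, ⟨v, -, rfl⟩, ⟨u, -, rfl⟩, hne, hc1, hc0, horbit⟩
    have heq0 : armTo z u = armTo z H.c0 := armTo_eq_of_mem hc0
    have heq1 : armTo z v = armTo z H.c1 := armTo_eq_of_mem hc1
    refine ⟨⟨fun h => notMem_armTo (h ▸ hc0), fun h => notMem_armTo (h ▸ hc1), ?_⟩, ?_⟩
    · exact fun h => hne (heq1.trans (h.symm.trans heq0.symm))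
    · exact fun k hk => heq0 ▸ horbit k hk
  · rintro ⟨⟨hc0, hc1, hne⟩, horbit⟩
    exact ⟨_, _, armTo_mem_arms hc1, armTo_mem_arms hc0, hne.symm, mem_armTo_self hc1,
      mem_armTo_self hc0, horbit⟩

theorem iterate_mem_arc_c0 (hx : y ∈ H.arc H.c0 x)
    (hy : ∀ i, 1 ≤ i → i ≤ k → H.f^[i] y ∉ H.arc H.c0 H.c1) :
    H.f^[k] y ∈ H.arc H.c0 (H.f^[k] x) := by
  have hT := H.isFiniteTree
  induction k with
  | zero => exact hx
  | succ k ih =>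
    have hprev := ih fun i hi hik => hy i hi (Nat.le_succ_of_le hik)
    have hnotMem := hy (k + 1) (Nat.le_add_left 1 k) le_rfl
    simp only [Function.iterate_succ_apply'] at hnotMem ⊢
    exact (hT.mem_arc_or_mem_arc H.c0 (map_mem_arc hprev fun h => h.2 (Or.inl rfl))).resolve_left
      (hT.arc_comm H.c0 _ ▸ hnotMem)

/-- If `y` separates `c₀` from `x`, then `f^[i] y` separates `c₀` from `f^[i] x` for `i ≤ l`, and at
time `l` so does `y` itself: the argument repeats. -/
theorem iterate_ne_c0_of_returning (hl : 1 ≤ l) (hne : ∀ i < l, H.f^[i] y ≠ H.c0)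
    (havoid : ∀ i, 1 ≤ i → i ≤ l → H.f^[i] y ∉ H.arc H.c0 H.c1)
    (hret : y ∈ H.arc H.c0 (H.f^[l] y)) (hx : y ∈ H.arc H.c0 x) (N : ℕ) : H.f^[N] x ≠ H.c0 := by
  have hT := H.isFiniteTree
  induction N using Nat.strong_induction_on generalizing x with
  | _ N ih =>
    rcases lt_or_ge N l with hN | hN
    · intro hc
      have hmem := iterate_mem_arc_c0 hx fun i hi hiN => havoid i hi (hiN.trans hN.le)
      rw [hc, hT.arc_self] at hmem
      exact hne N hN hmem
    · have hmem := hT.arc_subset_left (iterate_mem_arc_c0 hx havoid) hret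
      have hrec := ih (N - l) (Nat.sub_lt_of_pos_le hl hN) hmem
      rwa [← Function.iterate_add_apply, Nat.sub_add_cancel hN] at hrec

theorem exists_iterate_mem_arc_c0_c1 (hc0 : H.c0 ∈ Function.periodicPts H.f)
    (hz : z ∈ Function.periodicPts H.f) (hne : ∀ k, H.f^[k] z ≠ H.c0) :
    ∃ k, H.f^[k] z ∈ H.arc H.c0 H.c1 := by
  have hT := H.isFiniteTree
  by_contra! havoid
  obtain ⟨p, hp, hpz⟩ := hz
  have hret : z ∈ H.arc H.c0 (H.f^[p] z) := hpz.eq.symm ▸ hT.right_mem H.c0 z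
  obtain ⟨e, he, hze⟩ := hT.exists_isEndpoint_mem_arc (hne 0).symm
  obtain ⟨N, hN⟩ := exists_iterate_eq_c0 hc0 he
  exact iterate_ne_c0_of_returning hp (fun i _ => hne i) (fun i _ _ => havoid i) hret hze N hN

/-- Otherwise `c₁` would never reach `c₀`, by `iterate_ne_c0_of_returning` applied to the last orbit
point on `[c₀, c₁]` before time `u`. -/
theorem iterate_mem_armTo_c0 (hc0 : H.c0 ∈ Function.periodicPts H.f)
    (hne : ∀ k, H.f^[k] w ≠ H.c0) (hw : w ∈ H.arc H.c0 H.c1)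
    (hfar : ∀ i, H.f^[i] w ∈ H.arc H.c0 H.c1 → H.f^[i] w ∈ H.arc H.c0 w) {u : ℕ}
    (hu : H.f^[u] w ≠ w) : H.f^[u] w ∈ armTo w H.c0 := by
  have hT := H.isFiniteTree
  refine hT.mem_armTo_iff.2 fun hmem => ?_
  have hu' : H.f^[u] w ∉ H.arc H.c0 H.c1 := fun h => hu (hT.antisymm (hfar u h) hmem)
  obtain ⟨j, hju, hj, hlast⟩ : ∃ j ≤ u, H.f^[j] w ∈ H.arc H.c0 H.c1 ∧
      ∀ i, j < i → i ≤ u → H.f^[i] w ∉ H.arc H.c0 H.c1 :=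
    exists_last_of_le (P := fun i => H.f^[i] w ∈ H.arc H.c0 H.c1) (i := 0) hw u.zero_le
  have hlt : j < u := hju.lt_of_ne fun h => hu' (h ▸ hj)
  have hret : H.f^[j] w ∈ H.arc H.c0 (H.f^[u - j] (H.f^[j] w)) := by
    rw [← Function.iterate_add_apply, Nat.sub_add_cancel hju]
    exact hT.arc_subset_left hmem (hfar j hj)
  obtain ⟨N, hN⟩ := exists_iterate_c1_eq_c0 hc0
  refine iterate_ne_c0_of_returning (Nat.sub_pos_of_lt hlt) (fun i _ => ?_) (fun i hi hil => ?_)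
    hret hj N hN
  · rw [← Function.iterate_add_apply]
    exact hne _
  · rw [← Function.iterate_add_apply]
    exact hlast _ (by lia) (by lia)

theorem exists_isCharacteristic (hc0 : H.c0 ∈ Function.periodicPts H.f)
    (hz : z ∈ Function.periodicPts H.f) (hne : ∀ k, H.f^[k] z ≠ H.c0) :
    ∃ k, H.IsCharacteristic (H.f^[k] z) := by
  have hT := H.isFiniteTree
  have := hT.t2
  have hfin : (range fun k => H.f^[k] z).Finite := by
    obtain ⟨p, hp, hpz⟩ := hz
    refine ((finite_lt_nat p).image fun k => H.f^[k] z).subset ?_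
    rintro _ ⟨k, rfl⟩
    exact ⟨k % p, Nat.mod_lt k hp, hpz.iterate_mod_apply k⟩
  obtain ⟨i, hi⟩ := exists_iterate_mem_arc_c0_c1 hc0 hz hne
  obtain ⟨_, ⟨⟨k, rfl⟩, hw⟩, hfar⟩ :=
    hT.exists_farthest hfin.isClosed ⟨_, mem_range_self i, hi⟩
  have hne' (i : ℕ) : H.f^[i] (H.f^[k] z) ≠ H.c0 := by
    rw [← Function.iterate_add_apply]
    exact hne _
  refine ⟨k, isCharacteristic_iff.2 ⟨hT.separates_iff.2 ⟨(hne k).symm, fun h => ?_, hw⟩,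
    fun u => iterate_mem_armTo_c0 hc0 hne' hw fun i hi => hfar _ ⟨⟨i + k, ?_⟩, hi⟩⟩⟩
  · obtain ⟨N, hN⟩ := exists_iterate_c1_eq_c0 hc0
    exact hne' N (h ▸ hN)
  · exact Function.iterate_add_apply H.f i k z

/-- The characteristic point `f^[k] z` lies on `[z, c₁]`, whose endpoints have itineraries with
the same first `n` entries. -/
theorem periodic_symOf_iterate (hc0 : H.c0 ∈ Function.periodicPts H.f)
    (hz : Function.IsPeriodicPt H.f (n + 1) z) (hne : ∀ j, H.f^[j] z ≠ H.c0)
    (hsym : ∀ j < n, H.symOf (H.f^[j] z) = H.symOf (H.f^[j] H.c1))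
    (hk : H.IsCharacteristic (H.f^[k] z)) :
    Function.Periodic (fun j => H.symOf (H.f^[j] z)) k := by
  have hT := H.isFiniteTree
  have hmem : H.f^[k] z ∈ H.arc z H.c1 := by
    obtain ⟨hsep, horbit⟩ := isCharacteristic_iff.1 hk
    rcases eq_or_ne z (H.f^[k] z) with hzk | hzk
    · exact hzk ▸ hT.left_mem z H.c1
    have hback : z ∈ armTo (H.f^[k] z) H.c0 := by
      obtain ⟨i, hi⟩ := exists_iterate_eq_of_mem_periodicPts ⟨n + 1, n.succ_pos, hz⟩ k
      have hmem := horbit i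
      rw [hi] at hmem
      exact hmem hzk
    exact (hT.mem_arc_or_mem_arc z (hT.separates_iff.1 hsep).2.2).resolve_left
      (hT.mem_armTo_iff.1 hback)
  refine periodic_of_prefix_eq (m := n) (fun j => ?_) fun j hj => ?_
  · simp only [Function.iterate_add_apply H.f j, hz.eq]
  · rw [Function.iterate_add_apply]
    exact symOf_iterate_eq_of_mem_arc hc0 (fun j _ => hne j) hsym hmem hj

theorem isCharacteristic_of_symOf_iterate_eq (hc0 : H.c0 ∈ Function.periodicPts H.f)
    (hper : ExactPeriod H.f z (n + 1)) (hne : ∀ j, H.f^[j] z ≠ H.c0)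
    (hmin : ¬IsBranchPt z → ∀ k, 1 ≤ k → Function.Periodic (fun j => H.symOf (H.f^[j] z)) k →
      n + 1 ≤ k)
    (hsym : ∀ j < n, H.symOf (H.f^[j] z) = H.symOf (H.f^[j] H.c1)) : H.IsCharacteristic z := by
  have hz : Function.IsPeriodicPt H.f (n + 1) z := hper.2.1
  obtain ⟨k, hk, hchar⟩ : ∃ k < n + 1, H.IsCharacteristic (H.f^[k] z) := by
    obtain ⟨k, hchar⟩ := exists_isCharacteristic hc0 ⟨n + 1, n.succ_pos, hz⟩ hne
    exact ⟨k % (n + 1), Nat.mod_lt k n.succ_pos, (hz.iterate_mod_apply k).symm ▸ hchar⟩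
  rcases k.eq_zero_or_pos with rfl | hkpos
  · exact hchar
  exfalso
  have hperiodic := periodic_symOf_iterate hc0 hz hne hsym hchar
  by_cases hb : IsBranchPt z
  · obtain ⟨j, hj⟩ := exists_symOf_iterate_ne hc0 (isBranchPt_iterate hc0 hb k) hb
      (hper.2.2 k hkpos hk)
    exact hj ((Function.iterate_add_apply H.f j k z).symm ▸ hperiodic j)
  · exact hk.not_ge (hmin hb k hkpos hperiodic)

/-! ### Arms along the orbit of a branch point -/

/-- A point of the arm at `f^[j] x` to which the germ of `f^[j]` at `x` sends the arm at `x`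
containing `y`, provided that the orbit of `x` avoids `c₀`. -/
noncomputable def armMapIterate (H : HubbardTree X) (x y : X) : ℕ → X
  | 0 => y
  | j + 1 => H.armMap (H.f^[j] x) (armMapIterate H x y j)

theorem separates_armMapIterate (hne : ∀ j, H.f^[j] x ≠ H.c0) (h : Separates x a b) (j : ℕ) :
    Separates (H.f^[j] x) (H.armMapIterate x a j) (H.armMapIterate x b j) := by
  induction j with
  | zero => exact h
  | succ j ih =>
    rw [Function.iterate_succ_apply']
    exact H.separates_map (hne j) ih

theorem armMapIterate_add (i j : ℕ) : H.armMapIterate x y (i + j) =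
    H.armMapIterate (H.f^[i] x) (H.armMapIterate x y i) j := by
  induction j with
  | zero => rfl
  | succ j ih =>
    rw [← Nat.add_assoc, armMapIterate, armMapIterate, ih, ← Function.iterate_add_apply, add_comm j]

theorem armMapIterate_succ_eq_c1 (h : H.armMapIterate x y k ∈ armTo (H.f^[k] x) H.c0) :
    H.armMapIterate x y (k + 1) = H.c1 := by
  rw [armMapIterate, armMap, truncate, if_pos h, c1]

theorem armMapIterate_eq_iterate
    (h : ∀ i < k, H.armMapIterate x y i ∉ armTo (H.f^[i] x) H.c0) :
    H.armMapIterate x y k = H.f^[k] y := by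
  induction k with
  | zero => rfl
  | succ k ih =>
    rw [armMapIterate, armMap, truncate, if_neg (h k k.lt_succ_self),
      ih fun i hi => h i (hi.trans k.lt_succ_self), Function.iterate_succ_apply']

theorem iterate_c1_mem_armTo_c0 (hz : H.IsCharacteristic z) (hw : w ∈ armTo z H.c0)
    (hwz : H.f^[l] w = z) (hl : H.f^[l] z ≠ z) (hne : ∀ i < l, H.f^[i] w ≠ H.c0)
    (hside : ∀ i < l, H.f^[i] H.c1 ∉ armTo (H.f^[i] w) H.c0) : H.f^[l] H.c1 ∈ armTo z H.c0 := by
  have hT := H.isFiniteTree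
  obtain ⟨hsep, horbit⟩ := isCharacteristic_iff.1 hz
  have hmem : z ∈ H.arc w H.c1 :=
    (hT.mem_arc_or_mem_arc w (hT.separates_iff.1 hsep).2.2).resolve_left (hT.mem_armTo_iff.1 hw)
  have hiter := iterate_mem_arc hmem fun i hi =>
    hT.mem_armTo_iff.1 (hT.mem_armTo_of_notMem_armTo (hne i hi) (hside i hi))
  rw [hwz] at hiter
  rw [armTo_eq_of_mem (horbit l hl), hT.armTo_eq_of_mem_arc hiter hl]
  refine mem_armTo_self fun h => hl ?_
  rwa [h, hT.arc_self] at hiter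

/-- After the last time it faces `c₀` the arm is the one containing the corresponding image
of `c₁`. -/
theorem armTo_armMapIterate_eq (hz : H.IsCharacteristic z) (hper : ExactPeriod H.f z m)
    (hne : ∀ j, H.f^[j] z ≠ H.c0) (hk : k < m)
    (hface : H.armMapIterate z y k ∈ armTo (H.f^[k] z) H.c0) :
    armTo z (H.armMapIterate z y m) = armTo z H.c0 ∨
      armTo z (H.armMapIterate z y m) = armTo z H.c1 := by
  obtain ⟨-, hperz, hmin⟩ := hper
  obtain ⟨j, hj, hjface, hlast⟩ :=
    exists_last_of_le (P := fun i => H.armMapIterate z y i ∈ armTo (H.f^[i] z) H.c0) hface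
      (Nat.le_sub_one_of_lt hk)
  obtain ⟨l, rfl⟩ : ∃ l, m = j + 1 + l := Nat.exists_eq_add_of_le (by lia)
  have hshift (i : ℕ) : H.armMapIterate z y (j + 1 + i) =
      H.armMapIterate (H.f^[j + 1] z) H.c1 i := by
    rw [armMapIterate_add, armMapIterate_succ_eq_c1 hjface]
  rcases l.eq_zero_or_pos with rfl | hl
  · exact Or.inr (congrArg _ (hshift 0))
  left
  have hiter (i : ℕ) : H.f^[i] (H.f^[j + 1] z) = H.f^[j + 1 + i] z := by
    rw [← Function.iterate_add_apply, add_comm]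
  have hside (i : ℕ) (hi : i < l) :
      H.armMapIterate (H.f^[j + 1] z) H.c1 i ∉ armTo (H.f^[i] (H.f^[j + 1] z)) H.c0 := by
    rw [← hshift, hiter]
    exact hlast _ (by lia) (by lia)
  have htrack {i : ℕ} (hi : i ≤ l) : H.armMapIterate (H.f^[j + 1] z) H.c1 i = H.f^[i] H.c1 :=
    armMapIterate_eq_iterate fun i' hi' => hside i' (hi'.trans_le hi)
  rw [hshift, htrack le_rfl]
  have horbit := (isCharacteristic_iff.1 hz).2 (j + 1) (hmin _ (by lia) (by lia))
  exact (armTo_eq_of_mem (iterate_c1_mem_armTo_c0 hz horbit ((hiter l).trans hperz)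
    (hmin l hl (by lia)) (fun i _ => hiter i ▸ hne _)
    fun i hi => htrack hi.le ▸ hside i hi)).symm

/-- The return map permutes the arms of `c₀` and `c₁`, so it preserves the set of the others. -/
theorem separates_armMapIterate_of_face (hz : H.IsCharacteristic z) (hper : ExactPeriod H.f z m)
    (hne : ∀ j, H.f^[j] z ≠ H.c0) (hk : k < m)
    (hface : H.armMapIterate z H.c1 k ∈ armTo (H.f^[k] z) H.c0)
    (hy0 : Separates z y H.c0) (hy1 : Separates z y H.c1) :
    Separates z (H.armMapIterate z y m) H.c0 ∧ Separates z (H.armMapIterate z y m) H.c1 := by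
  have hsep := (isCharacteristic_iff.1 hz).1
  have hret1 := armTo_armMapIterate_eq hz hper hne hk hface
  have hret0 := armTo_armMapIterate_eq (y := H.c0) hz hper hne (k.zero_le.trans_lt hk)
    (mem_armTo_self hsep.1)
  have h01 := separates_armMapIterate hne hsep m
  have hm0 := separates_armMapIterate hne hy0 m
  have hm1 := separates_armMapIterate hne hy1 m
  rw [hper.2.1] at h01 hm0 hm1
  obtain ⟨hy, -, hm0⟩ := hm0
  have hm1 := hm1.2.2
  have h01 := h01.2.2
  refine ⟨⟨hy, hsep.1, ?_⟩, hy, hsep.2.1, ?_⟩ <;> grind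

theorem armMapIterate_notMem_of_face (hz : H.IsCharacteristic z) (hper : ExactPeriod H.f z m)
    (hne : ∀ j, H.f^[j] z ≠ H.c0) (hk : k < m)
    (hface : H.armMapIterate z H.c1 k ∈ armTo (H.f^[k] z) H.c0)
    (hy0 : Separates z y H.c0) (hy1 : Separates z y H.c1) (N : ℕ) :
    H.armMapIterate z y N ∉ armTo (H.f^[N] z) H.c0 := by
  induction N using Nat.strong_induction_on generalizing y with
  | _ N ih =>
    obtain ⟨hm0, hm1⟩ := separates_armMapIterate_of_face hz hper hne hk hface hy0 hy1
    rcases lt_or_ge N m with hN | hN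
    · exact fun hmem => (armTo_armMapIterate_eq hz hper hne hN hmem).elim hm0.2.2 hm1.2.2
    · obtain ⟨i, rfl⟩ := Nat.exists_eq_add_of_le hN
      have hrec := ih i (Nat.lt_add_of_pos_left hper.1) hm0 hm1
      rwa [armMapIterate_add, add_comm m, Function.iterate_add_apply, hper.2.1]

/-- Otherwise the endpoint of a third arm at `z` would never reach `c₀`. -/
theorem armMapIterate_c1_notMem (hc0 : H.c0 ∈ Function.periodicPts H.f) (hb : IsBranchPt z)
    (hz : H.IsCharacteristic z) (hper : ExactPeriod H.f z m) (hk : k < m) :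
    H.armMapIterate z H.c1 k ∉ armTo (H.f^[k] z) H.c0 := by
  intro hface
  have hne := iterate_ne_c0_of_isBranchPt hc0 hb
  have hsep := (isCharacteristic_iff.1 hz).1
  obtain ⟨y, hy0, hy1⟩ := hb.exists_separates hsep.1 hsep.2.1
  obtain ⟨e, he, hey⟩ := H.isFiniteTree.exists_isEndpoint_mem_armTo hy0.1
  have hez : e ≠ z := ne_of_mem_armTo (mem_armTo_symm hey)
  have harm := armTo_eq_of_mem hey
  obtain ⟨N, hN⟩ := exists_iterate_eq_c0 hc0 he
  have hnotMem := armMapIterate_notMem_of_face hz hper hne hk hface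
    ⟨hez, hy0.2.1, harm ▸ hy0.2.2⟩ ⟨hez, hy1.2.1, harm ▸ hy1.2.2⟩
  refine hnotMem N ?_
  rw [armMapIterate_eq_iterate fun i _ => hnotMem i, hN]
  exact mem_armTo_self (hne N).symm

theorem symOf_iterate_eq_of_isCharacteristic (hc0 : H.c0 ∈ Function.periodicPts H.f)
    (hb : IsBranchPt z) (hz : H.IsCharacteristic z) (hper : ExactPeriod H.f z m) (hk : k < m) :
    H.symOf (H.f^[k] z) = H.symOf (H.f^[k] H.c1) := by
  have hnotMem {i : ℕ} (hi : i < m) := armMapIterate_c1_notMem hc0 hb hz hper hi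
  have htrack : H.armMapIterate z H.c1 k = H.f^[k] H.c1 :=
    armMapIterate_eq_iterate fun i hi => hnotMem (hi.trans hk)
  exact symOf_eq_of_mem_armTo (H.isFiniteTree.mem_armTo_of_notMem_armTo
    (iterate_ne_c0_of_isBranchPt hc0 hb k) (htrack ▸ hnotMem hk))

end HubbardTree

/-- Corollary 3.7, "Itinerary of Characteristic Point".
In a Hubbard tree with `*`-periodic kneading sequence, let `z` be a periodic point
of exact period `m` whose orbit avoids the critical point (if `z` is not a branch
point, assume its itinerary also has exact period `m`). If the first `m - 1`
entries of the itinerary of `z` agree with those of the kneading sequence, then `z`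
is characteristic; conversely, if `z` is a characteristic branch point, then the
first `m` entries of its itinerary agree with the kneading sequence. -/
theorem itinerary_of_characteristic_point
    {X : Type*} [TopologicalSpace X] (H : HubbardTree X)
    (hν : ∃ n : ℕ, StarPeriodic H.kneading n)
    (z : X) (m : ℕ) (hper : ExactPeriod H.f z m)
    (hnotc0 : ∀ k : ℕ, H.f^[k] z ≠ H.c0)
    (hitin : ¬ IsBranchPt z → ∀ m' : ℕ, 1 ≤ m' →
      (∀ k : ℕ, 1 ≤ k → H.itin z (k + m') = H.itin z k) → m ≤ m') :
    ((∀ k : ℕ, 1 ≤ k → k ≤ m - 1 → H.itin z k = H.kneading k) →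
      H.IsCharacteristic z) ∧
    (IsBranchPt z → H.IsCharacteristic z →
      ∀ k : ℕ, 1 ≤ k → k ≤ m → H.itin z k = H.kneading k) := by
  obtain ⟨n, -, -, hstar, -⟩ := hν
  have hc0 := HubbardTree.c0_mem_periodicPts hstar
  constructor
  · intro hagree
    obtain ⟨n, rfl⟩ := Nat.exists_eq_add_of_le' hper.1
    refine HubbardTree.isCharacteristic_of_symOf_iterate_eq hc0 hper hnotc0 ?_
      fun j hj => hagree (j + 1) j.succ_pos hj
    refine fun hb p hp hperiodic => hitin hb p hp fun k hk => ?_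
    simpa only [HubbardTree.itin, Nat.sub_add_comm hk] using hperiodic (k - 1)
  · intro hb hchar k hk hkm
    exact HubbardTree.symOf_iterate_eq_of_isCharacteristic hc0 hb hchar hper
      (Nat.sub_one_lt_of_le hk hkm)

end HubbardTrees
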